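/- Assume the number-field distortion setup. Then for every 0 ≤ j ≤ J, every a ∈ O_K, and every nonzero ideal I ⊆ O_K dividing Q, one has P_j({b + Q ∈ O_K/Q : b ≡ a mod I}) ≤ (1/N(I)) · ∏_{1 ≤ i ≤ j, p_i | I} (1 − δ_i)^{−1}. -/

import Mathlib

/-!
On `G = 𝓞 K ⧸ Q`, let `L_j` be the kernel of `π_j`. Each `𝓑_j` is a union of cosets of `L_j`, so
`P_j` is constant on cosets of `L_j`, and passing from `P_j` to `P_{j+1}` preserves the mass of each
coset of `L_j`. If `p_{j+1} ∤ I`, then `L_j ⊆ H + L_{j+1}`, where `H` is the image of `I`. For an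
`L_{j+1}`-periodic `f`, the sum of `f` over `c + H` is then unchanged when `c` moves by an element
of `L_j`; averaging over `L_j` writes it through the sums of `f` over cosets of `L_j`. Hence the
class modulo `I` keeps its mass. If `p_{j+1} ∣ I`, the pointwise bound
`P_{j+1} ≤ P_j / (1 - δ_{j+1})` supplies the extra factor.
-/

set_option maxHeartbeats 1000000
set_option synthInstance.maxHeartbeats 1000000

open scoped Classical
open NumberField

/-- `p` is the unique prime ideal factor of `I` of largest norm. -/
def IsPmin {K : Type*} [Field K] [NumberField K] (I p : Ideal (𝓞 K)) : Prop :=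
  p.IsPrime ∧ p ∣ I ∧ ∀ q : Ideal (𝓞 K), q.IsPrime → q ∣ I → q ≠ p →
    Ideal.absNorm q < Ideal.absNorm p

/-- A nonzero proper ideal is distinguishable if it has a unique prime factor of largest norm. -/
def Distinguishable {K : Type*} [Field K] [NumberField K] (I : Ideal (𝓞 K)) : Prop :=
  I ≠ ⊥ ∧ I ≠ ⊤ ∧ ∃ p : Ideal (𝓞 K), IsPmin I p

/-! ### Sums over cosets in a finite abelian group -/

section Coset

variable {G : Type*} [AddCommGroup G] [Fintype G]

/-- The coset `c + L` as a finset. For `L` the kernel of `π_j` it is the fiber `F_j(c)`. -/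
noncomputable def cosetFinset (L : AddSubgroup G) (c : G) : Finset G :=
  Finset.univ.filter fun x => x - c ∈ L

lemma mem_cosetFinset {L : AddSubgroup G} {c x : G} : x ∈ cosetFinset L c ↔ x - c ∈ L := by
  simp [cosetFinset]

lemma self_mem_cosetFinset (L : AddSubgroup G) (c : G) : c ∈ cosetFinset L c := by
  simp [mem_cosetFinset]

lemma cosetFinset_add (L : AddSubgroup G) (c : G) {l : G} (hl : l ∈ L) :
    cosetFinset L (c + l) = cosetFinset L c := by
  ext x
  rw [mem_cosetFinset, mem_cosetFinset, ← sub_sub, sub_eq_add_neg (x - c),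
    L.add_mem_cancel_right (L.neg_mem hl)]

lemma sum_cosetFinset {M : Type*} [AddCommMonoid M] (L : AddSubgroup G) (c : G) (f : G → M) :
    ∑ x ∈ cosetFinset L c, f x = ∑ l : L, f (c + l) := by
  symm
  refine Finset.sum_bij' (fun l _ => c + (l : G))
    (fun x hx => ⟨x - c, mem_cosetFinset.mp hx⟩) ?_ ?_ ?_ ?_ ?_ <;>
  simp [mem_cosetFinset]

lemma card_cosetFinset (L : AddSubgroup G) (c : G) : (cosetFinset L c).card = Nat.card L := by
  rw [Finset.card_eq_sum_ones, sum_cosetFinset]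
  simp

lemma eq_of_mem_cosetFinset {X : Type*} {L : AddSubgroup G} {f : G → X}
    (hf : ∀ l ∈ L, Function.Periodic f l) {c x : G} (hx : x ∈ cosetFinset L c) : f x = f c := by
  simpa using hf _ (mem_cosetFinset.mp hx) c

lemma sum_cosetFinset_periodic {M : Type*} [AddCommMonoid M] {H L : AddSubgroup G} {f : G → M}
    (hf : ∀ l ∈ L, Function.Periodic f l) :
    ∀ y ∈ H ⊔ L, Function.Periodic (fun c => ∑ x ∈ cosetFinset H c, f x) y := by
  intro y hy c
  obtain ⟨h, hh, l, hl, rfl⟩ := AddSubgroup.mem_sup.mp hy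
  calc ∑ x ∈ cosetFinset H (c + (h + l)), f x
      = ∑ k : H, f (c + k + l) := by
        rw [add_comm h, ← add_assoc, cosetFinset_add H _ hh, sum_cosetFinset]
        simp only [add_right_comm]
    _ = ∑ x ∈ cosetFinset H c, f x := by
        simp only [hf l hl _, sum_cosetFinset]

/-- The inner sums on the right do not see how `f` is distributed inside the cosets of `L`. -/
lemma card_nsmul_sum_cosetFinset {M : Type*} [AddCommMonoid M] {H L L' : AddSubgroup G}
    (hL : L ≤ H ⊔ L') {f : G → M} (hf : ∀ l ∈ L', Function.Periodic f l) (c : G) :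
    Nat.card L • ∑ x ∈ cosetFinset H c, f x =
      ∑ x ∈ cosetFinset H c, ∑ y ∈ cosetFinset L x, f y := by
  calc Nat.card L • ∑ x ∈ cosetFinset H c, f x
      = ∑ l : L, ∑ x ∈ cosetFinset H (c + l), f x := by
        simp [fun l : L => sum_cosetFinset_periodic hf _ (hL l.2) c]
    _ = ∑ l : L, ∑ h : H, f (c + h + l) := by
        simp only [sum_cosetFinset, add_right_comm]
    _ = ∑ x ∈ cosetFinset H c, ∑ y ∈ cosetFinset L x, f y := by
        rw [Finset.sum_comm]
        simp only [sum_cosetFinset]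

lemma sum_cosetFinset_congr {M : Type*} [AddCommMonoid M] [IsAddTorsionFree M]
    {H L L' : AddSubgroup G} (hL : L ≤ H ⊔ L') {f g : G → M}
    (hf : ∀ l ∈ L', Function.Periodic f l) (hg : ∀ l ∈ L', Function.Periodic g l)
    (hfg : ∀ x, ∑ y ∈ cosetFinset L x, f y = ∑ y ∈ cosetFinset L x, g y) (c : G) :
    ∑ x ∈ cosetFinset H c, f x = ∑ x ∈ cosetFinset H c, g x := by
  apply nsmul_right_injective (Nat.card_pos (α := L)).ne'
  simp only [card_nsmul_sum_cosetFinset hL hf, card_nsmul_sum_cosetFinset hL hg, hfg]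

/-- The proportion of the coset `x + L` covered by `B`. For `L` the kernel of `π_{j-1}` and
`B = 𝓑_j` this is `α_j(x)`. -/
noncomputable def cosetDensity (L : AddSubgroup G) (B : Finset G) (x : G) : ℝ :=
  (cosetFinset L x ∩ B).card / (cosetFinset L x).card

lemma cosetDensity_nonneg (L : AddSubgroup G) (B : Finset G) (x : G) :
    0 ≤ cosetDensity L B x := by
  unfold cosetDensity
  positivity

lemma card_cosetFinset_ne_zero (L : AddSubgroup G) (x : G) :
    ((cosetFinset L x).card : ℝ) ≠ 0 :=
  Nat.cast_ne_zero.mpr (Finset.card_ne_zero_of_mem (self_mem_cosetFinset L x))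

lemma cosetDensity_ne_zero_of_mem (L : AddSubgroup G) {B : Finset G} {x : G} (hx : x ∈ B) :
    cosetDensity L B x ≠ 0 :=
  div_ne_zero (Nat.cast_ne_zero.mpr (Finset.card_ne_zero_of_mem
    (Finset.mem_inter.mpr ⟨self_mem_cosetFinset L x, hx⟩))) (card_cosetFinset_ne_zero L x)

lemma cosetDensity_periodic (L : AddSubgroup G) (B : Finset G) :
    ∀ l ∈ L, Function.Periodic (cosetDensity L B) l := by
  intro l hl x
  rw [cosetDensity, cosetFinset_add L x hl, cosetDensity]

end Coset

/-! ### The distortion -/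

section Distortion

/-- The factor by which one step of the distortion multiplies the weight of a point, in terms of
the density `α` of the removed set in the fiber of the point, the threshold `δ`, and whether the
point is removed (`b`). The two regimes `α < δ` and `δ ≤ α` of the construction are the single
formula in `min α δ`; for `α = 0` the convention `0 / 0 = 0` makes the factor `1`. -/
noncomputable def distortionFactor (α δ : ℝ) (b : Prop) [Decidable b] : ℝ :=
  (1 - if b then min α δ / α else 0) / (1 - min α δ)

lemma mul_distortionFactor {w α δ : ℝ} {b : Prop} [Decidable b] (hα : 0 ≤ α) (hδ : 0 ≤ δ)
    (hb : b → α ≠ 0) :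
    w * distortionFactor α δ b =
      if α < δ then (if b then 0 else w / (1 - α))
      else if α = 0 then w
      else w * (α - (if b then δ else 0)) / (α * (1 - δ)) := by
  unfold distortionFactor
  rcases hα.eq_or_lt with rfl | hα
  · have hnb : ¬ b := fun h => hb h rfl
    simp [hδ, hnb]
  rcases lt_or_ge α δ with hαδ | hδα
  · rw [min_eq_left hαδ.le, if_pos hαδ]
    split_ifs
    · simp [hα.ne']
    · rw [sub_zero, mul_one_div]
  · rw [min_eq_right hδα, if_neg hδα.not_gt, if_neg hα.ne']
    split_ifs
    · field_simp
    · rw [sub_zero, sub_zero, mul_one_div, mul_comm α, mul_div_mul_right _ _ hα.ne']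

lemma distortionFactor_nonneg {α δ : ℝ} (b : Prop) [Decidable b] (hα : 0 ≤ α) (hδ : δ < 1) :
    0 ≤ distortionFactor α δ b := by
  have hratio : min α δ / α ≤ 1 := div_le_one_of_le₀ (min_le_left α δ) hα
  have hmin : min α δ < 1 := (min_le_right α δ).trans_lt hδ
  refine div_nonneg ?_ (sub_pos.mpr hmin).le
  split_ifs <;> linarith

lemma distortionFactor_le {α δ : ℝ} (b : Prop) [Decidable b] (hα : 0 ≤ α) (hδ₀ : 0 ≤ δ)
    (hδ₁ : δ < 1) :
    distortionFactor α δ b ≤ (1 - δ)⁻¹ := by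
  have hratio : 0 ≤ min α δ / α := div_nonneg (le_min hα hδ₀) hα
  rw [distortionFactor, ← one_div]
  refine div_le_div₀ zero_le_one ?_ (sub_pos.mpr hδ₁) (sub_le_sub_left (min_le_right α δ) 1)
  split_ifs <;> linarith

variable {G : Type*} [AddCommGroup G] [Fintype G]

lemma sum_cosetFinset_distortionFactor (L : AddSubgroup G) (B : Finset G) {δ : ℝ} (hδ₀ : 0 ≤ δ)
    (hδ₁ : δ < 1) (x : G) :
    ∑ y ∈ cosetFinset L x, distortionFactor (cosetDensity L B x) δ (y ∈ B) =
      (cosetFinset L x).card := by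
  set F := cosetFinset L x
  set α := cosetDensity L B x with hα
  have hF : (F.card : ℝ) ≠ 0 := card_cosetFinset_ne_zero L x
  have hcard : ((F ∩ B).card : ℝ) = α * F.card := by rw [hα, cosetDensity, div_mul_cancel₀ _ hF]
  have hcap : α * (min α δ / α) = min α δ := by
    refine mul_div_cancel_of_imp' fun h => ?_
    rw [h, min_eq_left hδ₀]
  have hmin : 1 - min α δ ≠ 0 := (sub_pos.mpr ((min_le_right α δ).trans_lt hδ₁)).ne'
  calc ∑ y ∈ F, distortionFactor α δ (y ∈ B)
      = (F.card - (F ∩ B).card * (min α δ / α)) / (1 - min α δ) := by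
        simp only [distortionFactor, ← Finset.sum_div, Finset.sum_sub_distrib, Finset.sum_ite_mem,
          Finset.sum_const, nsmul_eq_mul, mul_one, mul_div_assoc]
    _ = F.card * (1 - min α δ) / (1 - min α δ) := by
        rw [hcard, mul_right_comm, hcap]
        ring
    _ = F.card := mul_div_cancel_right₀ _ hmin

/-- One step of the distortion: in each coset of `L`, weight is moved from `B` to its complement,
where `δ` caps the proportion of the coset that is treated as removed. -/
noncomputable def distort (L : AddSubgroup G) (B : Finset G) (δ : ℝ) (P : G → ℝ) (x : G) : ℝ :=
  P x * distortionFactor (cosetDensity L B x) δ (x ∈ B)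

lemma distort_nonneg (L : AddSubgroup G) (B : Finset G) {δ : ℝ} (hδ : δ < 1) {P : G → ℝ}
    (hP : 0 ≤ P) : 0 ≤ distort L B δ P := fun x =>
  mul_nonneg (hP x) (distortionFactor_nonneg _ (cosetDensity_nonneg L B x) hδ)

lemma distort_le (L : AddSubgroup G) (B : Finset G) {δ : ℝ} (hδ₀ : 0 ≤ δ) (hδ₁ : δ < 1)
    {P : G → ℝ} (hP : 0 ≤ P) (x : G) : distort L B δ P x ≤ P x * (1 - δ)⁻¹ :=
  mul_le_mul_of_nonneg_left
    (distortionFactor_le _ (cosetDensity_nonneg L B x) hδ₀ hδ₁) (hP x)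

lemma distort_periodic {L : AddSubgroup G} {B : Finset G} (δ : ℝ) {P : G → ℝ} {l : G}
    (hl : l ∈ L) (hP : Function.Periodic P l) (hB : Function.Periodic (· ∈ B) l) :
    Function.Periodic (distort L B δ P) l := by
  intro x
  simp only [distort, hP x, cosetDensity_periodic L B l hl x, hB x]

lemma sum_cosetFinset_distort {L : AddSubgroup G} (B : Finset G) {δ : ℝ} (hδ₀ : 0 ≤ δ)
    (hδ₁ : δ < 1) {P : G → ℝ} (hP : ∀ l ∈ L, Function.Periodic P l) (x : G) :
    ∑ y ∈ cosetFinset L x, distort L B δ P y = ∑ y ∈ cosetFinset L x, P y := by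
  calc ∑ y ∈ cosetFinset L x, distort L B δ P y
      = ∑ y ∈ cosetFinset L x, P x * distortionFactor (cosetDensity L B x) δ (y ∈ B) :=
        Finset.sum_congr rfl fun y hy => by
          rw [distort, eq_of_mem_cosetFinset hP hy,
            eq_of_mem_cosetFinset (cosetDensity_periodic L B) hy]
    _ = ∑ _y ∈ cosetFinset L x, P x := by
        rw [← Finset.mul_sum, sum_cosetFinset_distortionFactor L B hδ₀ hδ₁, Finset.sum_const,
          nsmul_eq_mul, mul_comm]
    _ = ∑ y ∈ cosetFinset L x, P y :=
        Finset.sum_congr rfl fun y hy => (eq_of_mem_cosetFinset hP hy).symm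

/-- The measures `P_j` of the distortion method, by their values at points. The cosets of `L j`
are the fibers of `π_j`; as in the paper, the sets `B` and the thresholds `δ` are indexed from `1`,
so that `B (j + 1)` and `δ (j + 1)` belong to the step from `P_j` to `P_{j+1}`. -/
noncomputable def distortedMeasure (L : ℕ → AddSubgroup G) (B : ℕ → Finset G) (δ : ℕ → ℝ) :
    ℕ → G → ℝ
  | 0 => fun _ => 1 / Nat.card G
  | j + 1 => distort (L j) (B (j + 1)) (δ (j + 1)) (distortedMeasure L B δ j)

variable {L : ℕ → AddSubgroup G} {B : ℕ → Finset G} {δ : ℕ → ℝ}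

lemma eq_distortedMeasure {P : ℕ → G → ℝ} (hP0 : ∀ x, P 0 x = 1 / Nat.card G) :
    ∀ {j : ℕ}, (∀ i < j, 0 ≤ δ (i + 1)) →
      (∀ i < j, ∀ x, P (i + 1) x =
        if cosetDensity (L i) (B (i + 1)) x < δ (i + 1) then
          (if x ∈ B (i + 1) then 0 else P i x / (1 - cosetDensity (L i) (B (i + 1)) x))
        else if cosetDensity (L i) (B (i + 1)) x = 0 then P i x
        else P i x * (cosetDensity (L i) (B (i + 1)) x - (if x ∈ B (i + 1) then δ (i + 1) else 0)) /
          (cosetDensity (L i) (B (i + 1)) x * (1 - δ (i + 1)))) →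
      P j = distortedMeasure L B δ j
  | 0, _, _ => funext hP0
  | j + 1, hδ, hP => by
    funext x
    rw [hP j j.lt_succ_self x, ← mul_distortionFactor (cosetDensity_nonneg _ _ x)
      (hδ j j.lt_succ_self) (cosetDensity_ne_zero_of_mem _),
      eq_distortedMeasure hP0 (fun i hi => hδ i (hi.trans j.lt_succ_self))
        (fun i hi => hP i (hi.trans j.lt_succ_self))]
    rfl

lemma distortedMeasure_nonneg :
    ∀ {j : ℕ}, (∀ i < j, δ (i + 1) < 1) → 0 ≤ distortedMeasure L B δ j
  | 0, _ => fun _ => by simp [distortedMeasure]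
  | j + 1, hδ => distort_nonneg _ _ (hδ j j.lt_succ_self)
      (distortedMeasure_nonneg fun i hi => hδ i (hi.trans j.lt_succ_self))

lemma distortedMeasure_periodic (hL : Antitone L) :
    ∀ {j : ℕ}, (∀ i < j, ∀ l ∈ L (i + 1), Function.Periodic (· ∈ B (i + 1)) l) →
      ∀ l ∈ L j, Function.Periodic (distortedMeasure L B δ j) l
  | 0, _ => fun _ _ _ => rfl
  | j + 1, hB => fun l hl =>
      have hlj : l ∈ L j := hL j.le_succ hl
      distort_periodic _ hlj
        (distortedMeasure_periodic hL (fun i hi => hB i (hi.trans j.lt_succ_self)) l hlj)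
        (hB j j.lt_succ_self l hl)

lemma sum_cosetFinset_distortedMeasure_zero (H : AddSubgroup G) (c : G) :
    ∑ x ∈ cosetFinset H c, distortedMeasure L B δ 0 x = Nat.card H / Nat.card G := by
  simp [distortedMeasure, card_cosetFinset, div_eq_mul_inv]

lemma sum_cosetFinset_distortedMeasure_succ (hL : Antitone L) {H : AddSubgroup G} {j : ℕ}
    (hH : L j ≤ H ⊔ L (j + 1))
    (hB : ∀ i < j + 1, ∀ l ∈ L (i + 1), Function.Periodic (· ∈ B (i + 1)) l)
    (hδ₀ : 0 ≤ δ (j + 1)) (hδ₁ : δ (j + 1) < 1) (c : G) :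
    ∑ x ∈ cosetFinset H c, distortedMeasure L B δ (j + 1) x =
      ∑ x ∈ cosetFinset H c, distortedMeasure L B δ j x := by
  have hper : ∀ l ∈ L j, Function.Periodic (distortedMeasure L B δ j) l :=
    distortedMeasure_periodic hL fun i hi => hB i (hi.trans j.lt_succ_self)
  exact sum_cosetFinset_congr hH (distortedMeasure_periodic hL hB)
    (fun l hl => hper l (hL j.le_succ hl)) (sum_cosetFinset_distort _ hδ₀ hδ₁ hper) c

lemma sum_cosetFinset_distortedMeasure_succ_le (H : AddSubgroup G) {j : ℕ}
    (hδ₀ : 0 ≤ δ (j + 1)) (hδ₁ : ∀ i < j + 1, δ (i + 1) < 1) (c : G) :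
    ∑ x ∈ cosetFinset H c, distortedMeasure L B δ (j + 1) x ≤
      (∑ x ∈ cosetFinset H c, distortedMeasure L B δ j x) * (1 - δ (j + 1))⁻¹ := by
  rw [Finset.sum_mul]
  exact Finset.sum_le_sum fun x _ => distort_le _ _ hδ₀ (hδ₁ j j.lt_succ_self)
    (distortedMeasure_nonneg fun i hi => hδ₁ i (hi.trans j.lt_succ_self)) x

/-- `S` is the set of steps at which the coset may gain mass. -/
theorem sum_cosetFinset_distortedMeasure_le (hL : Antitone L) (H : AddSubgroup G)
    (S : ℕ → Prop) (c : G) {j : ℕ} (hS : ∀ i < j, ¬ S (i + 1) → L i ≤ H ⊔ L (i + 1))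
    (hB : ∀ i < j, ∀ l ∈ L (i + 1), Function.Periodic (· ∈ B (i + 1)) l)
    (hδ : ∀ i < j, δ (i + 1) ∈ Set.Ico (0 : ℝ) 1) :
    ∑ x ∈ cosetFinset H c, distortedMeasure L B δ j x ≤
      Nat.card H / Nat.card G * ∏ i ∈ (Finset.Icc 1 j).filter S, (1 - δ i)⁻¹ := by
  induction j with
  | zero => simp [sum_cosetFinset_distortedMeasure_zero]
  | succ j ih =>
    have hlast := hδ j j.lt_succ_self
    have hj := ih (fun i hi => hS i (hi.trans j.lt_succ_self))
      (fun i hi => hB i (hi.trans j.lt_succ_self)) fun i hi => hδ i (hi.trans j.lt_succ_self)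
    rw [Finset.prod_filter] at hj ⊢
    rw [Finset.prod_Icc_succ_top (by lia), ← mul_assoc]
    split_ifs with hSj
    · exact (sum_cosetFinset_distortedMeasure_succ_le H hlast.1 (fun i hi => (hδ i hi).2) c).trans
        (mul_le_mul_of_nonneg_right hj (inv_nonneg.mpr (sub_nonneg.mpr hlast.2.le)))
    · rw [mul_one, sum_cosetFinset_distortedMeasure_succ hL (hS j j.lt_succ_self hSj) hB
        hlast.1 hlast.2]
      exact hj

end Distortion

/-! ### Ideals with finite quotient -/

section Ideal

variable {R : Type*} [CommRing R]

lemma sup_pow_eq_top_of_not_le {I p : Ideal R} (hp : p.IsMaximal) (h : ¬ I ≤ p) (k : ℕ) :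
    I ⊔ p ^ k = ⊤ :=
  Ideal.sup_pow_eq_top (sup_comm p I ▸ hp.out.2 _ (left_lt_sup.mpr h))

lemma prod_pow_le_of_mem {ι : Type*} {t : Finset ι} (p : ι → Ideal R) {ν : ι → ℕ} {i : ι}
    (hi : i ∈ t) (hν : ν i ≠ 0) : ∏ k ∈ t, p k ^ ν k ≤ p i :=
  Ideal.le_of_dvd ((dvd_pow_self _ hν).trans (Finset.dvd_prod_of_mem _ hi))

lemma prod_pow_le_of_prod_pow_le {ι : Type*} {s t : Finset ι} (hst : s ⊆ t) {p : ι → Ideal R}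
    (ν : ι → ℕ) {I : Ideal R} (hI : ∏ i ∈ t, p i ^ ν i ≤ I)
    (hmax : ∀ i ∈ t, i ∉ s → (p i).IsMaximal) (hnle : ∀ i ∈ t, i ∉ s → ¬ I ≤ p i) :
    ∏ i ∈ s, p i ^ ν i ≤ I := by
  have hcop : I ⊔ ∏ i ∈ t \ s, p i ^ ν i = ⊤ :=
    Ideal.sup_prod_eq_top fun i hi => by
      obtain ⟨hit, his⟩ := Finset.mem_sdiff.mp hi
      exact sup_pow_eq_top_of_not_le (hmax i hit his) (hnle i hit his) _
  rw [← Finset.prod_sdiff hst] at hI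
  rw [← sup_eq_left, ← Ideal.sup_mul_eq_of_coprime_left hcop, sup_eq_left]
  exact hI

/-- The image of `Q_j = p_1 ^ ν_1 ⋯ p_j ^ ν_j` in `R ⧸ Q`. If `Q ≤ Q_j`, it is the kernel of the
projection `π_j : R ⧸ Q → R ⧸ Q_j`. -/
def fiberSubgroup (Q : Ideal R) (p : ℕ → Ideal R) (ν : ℕ → ℕ) (j : ℕ) : AddSubgroup (R ⧸ Q) :=
  ((∏ i ∈ Finset.Icc 1 j, p i ^ ν i).map (Ideal.Quotient.mk Q)).toAddSubgroup

lemma fiberSubgroup_antitone (Q : Ideal R) (p : ℕ → Ideal R) (ν : ℕ → ℕ) :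
    Antitone (fiberSubgroup Q p ν) := fun _ _ hij =>
  Submodule.toAddSubgroup_mono <| Ideal.map_mono <| Ideal.le_of_dvd <|
    Finset.prod_dvd_prod_of_subset _ _ _ (Finset.Icc_subset_Icc_right hij)

lemma fiberSubgroup_le_sup (Q : Ideal R) {p : ℕ → Ideal R} (ν : ℕ → ℕ) {I : Ideal R} {j : ℕ}
    (hp : (p (j + 1)).IsMaximal) (hI : ¬ I ≤ p (j + 1)) :
    fiberSubgroup Q p ν j ≤
      (I.map (Ideal.Quotient.mk Q)).toAddSubgroup ⊔ fiberSubgroup Q p ν (j + 1) := by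
  have hsup : ∏ i ∈ Finset.Icc 1 j, p i ^ ν i ≤ I ⊔ ∏ i ∈ Finset.Icc 1 (j + 1), p i ^ ν i := by
    rw [Finset.prod_Icc_succ_top (by lia),
      Ideal.sup_mul_eq_of_coprime_right (sup_pow_eq_top_of_not_le hp hI _)]
    exact le_sup_right
  intro x hx
  obtain ⟨y, hy, z, hz, rfl⟩ := Submodule.mem_sup.mp
    (Ideal.map_sup (Ideal.Quotient.mk Q) _ _ ▸ Ideal.map_mono hsup hx)
  exact AddSubgroup.add_mem_sup hy hz

lemma periodic_mem_of_forall_mem_iff {ι : Type*} {Q : Ideal R} {p : ℕ → Ideal R} {ν : ℕ → ℕ}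
    {j : ℕ} {B : Finset (R ⧸ Q)} {s : ι → Prop} {a : ι → R} {I : ι → Ideal R}
    (hI : ∀ i, s i → ∏ k ∈ Finset.Icc 1 j, p k ^ ν k ≤ I i)
    (hB : ∀ x, x ∈ B ↔
      ∃ i, s i ∧ x - Ideal.Quotient.mk Q (a i) ∈ (I i).map (Ideal.Quotient.mk Q)) :
    ∀ l ∈ fiberSubgroup Q p ν j, Function.Periodic (· ∈ B) l := by
  intro l hl x
  change (x + l ∈ B) = (x ∈ B)
  rw [hB, hB, eq_iff_iff]
  refine exists_congr fun i => and_congr_right fun hi => ?_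
  rw [add_sub_right_comm, Submodule.add_mem_iff_left _ (Ideal.map_mono (hI i hi) hl)]

lemma card_map_mk_div_card {Q I : Ideal R} [Finite (R ⧸ Q)] (hQI : Q ≤ I) :
    (Nat.card (I.map (Ideal.Quotient.mk Q)) : ℝ) / Nat.card (R ⧸ Q) =
      1 / Nat.card (R ⧸ I) := by
  have hcard := Submodule.card_eq_card_quotient_mul_card (I.map (Ideal.Quotient.mk Q))
  rw [Nat.card_congr (DoubleQuot.quotQuotEquivQuotOfLE hQI).toEquiv] at hcard
  have hpos : (Nat.card (I.map (Ideal.Quotient.mk Q)) : ℝ) ≠ 0 :=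
    Nat.cast_ne_zero.mpr Nat.card_pos.ne'
  rw [hcard, Nat.cast_mul, div_mul_cancel_left₀ hpos, one_div]

lemma isMaximal_of_isPrime_of_finite_quotient {Q p : Ideal R} [Finite (R ⧸ Q)] (hQp : Q ≤ p)
    (hp : p.IsPrime) : p.IsMaximal := by
  have : Finite (R ⧸ p) := .of_surjective _ (Ideal.Quotient.factor_surjective hQp)
  exact Ideal.Quotient.maximal_of_isField p (Finite.isField_of_domain (R ⧸ p))

theorem measure_congruence_class_bound_general {ι : Type*} {Q : Ideal R} [Fintype (R ⧸ Q)]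
    {p : ℕ → Ideal R} {ν : ℕ → ℕ} {s : ℕ → ι → Prop} {a : ι → R} {Idl : ι → Ideal R}
    {B : ℕ → Finset (R ⧸ Q)} {δ : ℕ → ℝ} {P : ℕ → R ⧸ Q → ℝ} {j : ℕ}
    (hp : ∀ i < j, (p (i + 1)).IsMaximal)
    (hIdl : ∀ i < j, ∀ k, s (i + 1) k → ∏ l ∈ Finset.Icc 1 (i + 1), p l ^ ν l ≤ Idl k)
    (hB : ∀ i < j, ∀ x, x ∈ B (i + 1) ↔
      ∃ k, s (i + 1) k ∧ x - Ideal.Quotient.mk Q (a k) ∈ (Idl k).map (Ideal.Quotient.mk Q))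
    (hδ : ∀ i < j, δ (i + 1) ∈ Set.Ico (0 : ℝ) 1)
    (hP0 : ∀ x, P 0 x = 1 / Nat.card (R ⧸ Q))
    (hP : ∀ i < j, ∀ x, P (i + 1) x =
      let α := cosetDensity (fiberSubgroup Q p ν i) (B (i + 1)) x
      if α < δ (i + 1) then (if x ∈ B (i + 1) then 0 else P i x / (1 - α))
      else if α = 0 then P i x
      else P i x * (α - (if x ∈ B (i + 1) then δ (i + 1) else 0)) / (α * (1 - δ (i + 1))))
    (a₀ : R) {I : Ideal R} (hI : Q ≤ I) :
    ∑ x ∈ cosetFinset (I.map (Ideal.Quotient.mk Q)).toAddSubgroup (Ideal.Quotient.mk Q a₀),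
        P j x ≤
      1 / (Nat.card (R ⧸ I) : ℝ) *
        ∏ i ∈ (Finset.Icc 1 j).filter (fun i => I ≤ p i), (1 - δ i)⁻¹ := by
  rw [eq_distortedMeasure hP0 (fun i hi => (hδ i hi).1) hP, ← card_map_mk_div_card hI]
  exact sum_cosetFinset_distortedMeasure_le (fiberSubgroup_antitone Q p ν) _ _ _
    (fun i hi => fiberSubgroup_le_sup Q ν (hp i hi))
    (fun i hi => periodic_mem_of_forall_mem_iff (hIdl i hi) (hB i hi)) hδ

end Ideal

/-! ### Number fields -/

section NumberField

variable {K : Type*} [Field K] [NumberField K]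

lemma IsPmin.not_dvd {I p q : Ideal (𝓞 K)} (h : IsPmin I p) (hq : q.IsPrime) (hne : q ≠ p)
    (hle : Ideal.absNorm p ≤ Ideal.absNorm q) : ¬ q ∣ I := fun hdvd =>
  (h.2.2 q hq hdvd hne).not_ge hle

lemma IsPmin.prod_pow_le {J : ℕ} {p : ℕ → Ideal (𝓞 K)} (ν : ℕ → ℕ) {I : Ideal (𝓞 K)}
    (hp : ∀ j ∈ Finset.Icc 1 J, (p j).IsMaximal)
    (hpinj : ∀ j ∈ Finset.Icc 1 J, ∀ j' ∈ Finset.Icc 1 J, p j = p j' → j = j')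
    (hpmono : ∀ j ∈ Finset.Icc 1 J, ∀ j' ∈ Finset.Icc 1 J, j ≤ j' →
      Ideal.absNorm (p j) ≤ Ideal.absNorm (p j'))
    (hI : ∏ i ∈ Finset.Icc 1 J, p i ^ ν i ≤ I) {j : ℕ} (hj : j ∈ Finset.Icc 1 J)
    (h : IsPmin I (p j)) : ∏ i ∈ Finset.Icc 1 j, p i ^ ν i ≤ I := by
  refine prod_pow_le_of_prod_pow_le (Finset.Icc_subset_Icc_right (Finset.mem_Icc.mp hj).2) ν hI
    (fun k hkJ _ => hp k hkJ) fun k hkJ hkj hle => ?_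
  have hjk : j < k := by grind
  exact h.not_dvd (hp k hkJ).isPrime (fun he => hjk.ne' (hpinj k hkJ j hj he))
    (hpmono j hj k hkJ hjk.le) (Ideal.dvd_iff_le.mpr hle)

end NumberField

/-- Upper bound for the `P_j`-measure of a congruence class modulo a divisor of `Q`. -/
theorem measure_congruence_class_bound
    {K : Type*} [Field K] [NumberField K]
    (n : ℕ) (hn : 0 < n)
    (a : Fin n → 𝓞 K) (Idl : Fin n → Ideal (𝓞 K))
    (hdist : ∀ i : Fin n, Distinguishable (Idl i))
    (hmono : ∀ i j : Fin n, i ≤ j → Ideal.absNorm (Idl i) ≤ Ideal.absNorm (Idl j))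
    (s : ℕ)
    (hsle : ∀ I₀ : Ideal (𝓞 K), (Finset.univ.filter fun i : Fin n => Idl i = I₀).card ≤ s)
    (hseq : ∃ I₀ : Ideal (𝓞 K), (Finset.univ.filter fun i : Fin n => Idl i = I₀).card = s)
    (Q : Ideal (𝓞 K)) (hQ : Q = ⨅ i : Fin n, Idl i)
    (J : ℕ) (p : ℕ → Ideal (𝓞 K)) (ν : ℕ → ℕ)
    (hp : ∀ j ∈ Finset.Icc 1 J, (p j).IsPrime)
    (hν : ∀ j ∈ Finset.Icc 1 J, 1 ≤ ν j)
    (hpinj : ∀ j ∈ Finset.Icc 1 J, ∀ j' ∈ Finset.Icc 1 J, p j = p j' → j = j')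
    (hfact : Q = ∏ j ∈ Finset.Icc 1 J, p j ^ ν j)
    (hpmono : ∀ j ∈ Finset.Icc 1 J, ∀ j' ∈ Finset.Icc 1 J, j ≤ j' →
      Ideal.absNorm (p j) ≤ Ideal.absNorm (p j'))
    (Qp : ℕ → Ideal (𝓞 K)) (hQp : ∀ j : ℕ, Qp j = ∏ i ∈ Finset.Icc 1 j, p i ^ ν i)
    [Fintype (𝓞 K ⧸ Q)]
    (B : ℕ → Finset (𝓞 K ⧸ Q))
    (hB : ∀ j ∈ Finset.Icc 1 J, B j = Finset.univ.filter fun x : 𝓞 K ⧸ Q =>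
      ∃ i : Fin n, IsPmin (Idl i) (p j) ∧
        x - Ideal.Quotient.mk Q (a i) ∈ (Idl i).map (Ideal.Quotient.mk Q))
    (F : ℕ → (𝓞 K ⧸ Q) → Finset (𝓞 K ⧸ Q))
    (hF : ∀ (j : ℕ) (x : 𝓞 K ⧸ Q),
      F j x = Finset.univ.filter fun x' : 𝓞 K ⧸ Q => x' - x ∈ (Qp j).map (Ideal.Quotient.mk Q))
    (α : ℕ → (𝓞 K ⧸ Q) → ℝ)
    (hα : ∀ j ∈ Finset.Icc 1 J, ∀ x : 𝓞 K ⧸ Q,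
      α j x = ((F (j - 1) x ∩ B j).card : ℝ) / ((F (j - 1) x).card : ℝ))
    (δ : ℕ → ℝ) (hδ : ∀ j ∈ Finset.Icc 1 J, δ j ∈ Set.Icc (0 : ℝ) (1 / 2))
    (P : ℕ → (𝓞 K ⧸ Q) → ℝ)
    (hP0 : ∀ x : 𝓞 K ⧸ Q, P 0 x = 1 / (Fintype.card (𝓞 K ⧸ Q) : ℝ))
    (hPrec : ∀ j ∈ Finset.Icc 1 J, ∀ x : 𝓞 K ⧸ Q,
      P j x = if α j x < δ j then (if x ∈ B j then 0 else P (j - 1) x / (1 - α j x))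
        else if α j x = 0 then P (j - 1) x
        else P (j - 1) x * (α j x - (if x ∈ B j then δ j else 0)) / (α j x * (1 - δ j)))
    :
    ∀ j ≤ J, ∀ a₀ : 𝓞 K, ∀ I : Ideal (𝓞 K), I ≠ ⊥ → I ∣ Q →
      ∑ x ∈ Finset.univ.filter
          (fun x : 𝓞 K ⧸ Q => x - Ideal.Quotient.mk Q a₀ ∈ I.map (Ideal.Quotient.mk Q)),
        P j x ≤
      (1 / (Ideal.absNorm I : ℝ)) *
        ∏ i ∈ (Finset.Icc 1 j).filter (fun i => p i ∣ I), (1 - δ i)⁻¹ := by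
  intro j hj a₀ I _ hIQ
  have hmem : ∀ i < j, i + 1 ∈ Finset.Icc 1 J := fun i hi => Finset.mem_Icc.mpr (by lia)
  have hmax : ∀ i ∈ Finset.Icc 1 J, (p i).IsMaximal := fun i hi =>
    isMaximal_of_isPrime_of_finite_quotient
      (hfact.trans_le (prod_pow_le_of_mem p hi (Nat.one_le_iff_ne_zero.mp (hν i hi)))) (hp i hi)
  have hα' : ∀ i < j, ∀ x, α (i + 1) x = cosetDensity (fiberSubgroup Q p ν i) (B (i + 1)) x :=
    fun i hi x => by rw [hα _ (hmem i hi), Nat.add_sub_cancel, hF, hQp]; rfl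
  simp only [Ideal.dvd_iff_le, Ideal.absNorm_apply, Submodule.cardQuot_apply]
  exact measure_congruence_class_bound_general (s := fun i k => IsPmin (Idl k) (p i))
    (a := a) (B := B)
    (fun i hi => hmax _ (hmem i hi))
    (fun i hi k => IsPmin.prod_pow_le ν hmax hpinj hpmono (hfact ▸ hQ ▸ iInf_le Idl k) (hmem i hi))
    (fun i hi x => by simp [hB _ (hmem i hi)])
    (fun i hi => ⟨(hδ _ (hmem i hi)).1, (hδ _ (hmem i hi)).2.trans_lt (by norm_num)⟩)
    (fun x => by rw [hP0, Nat.card_eq_fintype_card])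
    (fun i hi x => by rw [hPrec _ (hmem i hi), hα' i hi, Nat.add_sub_cancel])
    a₀ (Ideal.le_of_dvd hIQ)
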